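/- arXiv:2604.26076 — 11 statements merged into one kernel-verified Lean document; each statement's English description precedes it below -/
import Mathlib

section
/- Fix W > 0, c > 0, μ_F > 0, σ_F ≥ 0, μ_r ∈ ℝ, σ_r > 0, and assume W·μ_F > σ_F². Then the quartic polynomial P(x) = σ_r²·x⁴ + W·(μ_r − σ_r²)·x² − W·c·x + (σ_F² − W·μ_F) has exactly one root in (0, ∞): there exists a unique x* > 0 with P(x*) = 0. -/
/-!
Write the quartic as `a x⁴ + b x² - d x - e` with `a, d, e > 0`. For `x > 0`, dividing by `x²` gives
`a x² + b - d / x - e / x²`, which is strictly increasing whatever the sign of `b`; hence there is at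
most one positive root. The quartic is `-e < 0` at `0` and positive for large `x`, so the intermediate
value theorem provides a positive root.
-/

/-- Strict monotonicity of `(a x⁴ + b x² - d x - e) / x²` on `(0, ∞)`, with denominators cleared. -/
lemma quartic_cross_lt {a b d e x y : ℝ} (ha : 0 < a) (hd : 0 < d) (he : 0 < e)
    (hx : 0 < x) (hxy : x < y) :
    y ^ 2 * (a * x ^ 4 + b * x ^ 2 - d * x - e) < x ^ 2 * (a * y ^ 4 + b * y ^ 2 - d * y - e) := by
  have hy : 0 < y := hx.trans hxy
  have hsub : 0 < y - x := sub_pos.2 hxy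
  have key : 0 < (y - x) * (a * x ^ 2 * y ^ 2 * (x + y) + d * x * y + e * (x + y)) := by
    positivity
  linarith

lemma exists_pos_quartic_root {a b d e : ℝ} (ha : 0 < a) (hd : 0 < d) (he : 0 < e) :
    ∃ x : ℝ, 0 < x ∧ a * x ^ 4 + b * x ^ 2 - d * x - e = 0 := by
  -- `M` is a Cauchy-type root bound: `M ≥ 1` and `a M` exceeds the sum of the other coefficients.
  obtain ⟨M, hM1, hM⟩ : ∃ M : ℝ, 1 ≤ M ∧ |b| + d + e ≤ a * M := by
    refine ⟨1 + (|b| + d + e) / a, le_add_of_nonneg_right (by positivity), ?_⟩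
    rw [mul_add, mul_div_cancel₀ _ ha.ne']
    linarith
  have hpos : 0 ≤ a * M ^ 4 + b * M ^ 2 - d * M - e := by
    have hsq : 1 ≤ M ^ 2 := one_le_pow₀ hM1
    have hlead : (|b| + d + e) * M ^ 2 ≤ a * M ^ 2 * M ^ 2 := by
      gcongr
      nlinarith [mul_le_mul_of_nonneg_left (le_self_pow₀ hM1 two_ne_zero) ha.le]
    have hquad : -|b| * M ^ 2 ≤ b * M ^ 2 := by
      gcongr
      exact neg_abs_le b
    have hlin : d * M ≤ d * M ^ 2 := by
      gcongr
      nlinarith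
    have hconst : e ≤ e * M ^ 2 := le_mul_of_one_le_right he.le hsq
    linarith
  have hcont : ContinuousOn (fun x : ℝ => a * x ^ 4 + b * x ^ 2 - d * x - e) (Set.Icc 0 M) := by
    fun_prop
  obtain ⟨x, hx, hroot⟩ := intermediate_value_Icc (zero_le_one.trans hM1) hcont
    (show (0 : ℝ) ∈ Set.Icc _ _ from ⟨by simpa using he.le, hpos⟩)
  refine ⟨x, hx.1.lt_of_ne ?_, hroot⟩
  rintro rfl
  simp [he.ne'] at hroot

/-- Under `W·μ_F > σ_F²`, the equilibrium quartic has exactly one positive root. -/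
theorem quartic_unique_positive_root (W c μF σF μr σr : ℝ)
    (hW : 0 < W) (hc : 0 < c) (hμF : 0 < μF) (hσF : 0 ≤ σF) (hσr : 0 < σr)
    (hWμF : σF ^ 2 < W * μF) :
    ∃! x : ℝ, 0 < x ∧
      σr ^ 2 * x ^ 4 + W * (μr - σr ^ 2) * x ^ 2 - W * c * x + (σF ^ 2 - W * μF) = 0 := by
  have ha : 0 < σr ^ 2 := by positivity
  have hd : 0 < W * c := by positivity
  have he : 0 < W * μF - σF ^ 2 := sub_pos.2 hWμF
  have hform (x : ℝ) :
      σr ^ 2 * x ^ 4 + W * (μr - σr ^ 2) * x ^ 2 - W * c * x + (σF ^ 2 - W * μF) =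
        σr ^ 2 * x ^ 4 + W * (μr - σr ^ 2) * x ^ 2 - W * c * x - (W * μF - σF ^ 2) := by ring
  simp only [hform]
  obtain ⟨x, hx, hroot⟩ := exists_pos_quartic_root (b := W * (μr - σr ^ 2)) ha hd he
  refine ⟨x, ⟨hx, hroot⟩, ?_⟩
  rintro y ⟨hy, hroot'⟩
  rcases lt_trichotomy y x with h | h | h
  · have hlt := quartic_cross_lt (b := W * (μr - σr ^ 2)) ha hd he hy h
    simp only [hroot, hroot', mul_zero, lt_irrefl] at hlt
  · exact h
  · have hlt := quartic_cross_lt (b := W * (μr - σr ^ 2)) ha hd he hx h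
    simp only [hroot, hroot', mul_zero, lt_irrefl] at hlt
end

section
/- Fix W > 0, c > 0, μ_F > 0, σ_F ≥ 0, μ_r ∈ ℝ, σ_r > 0 with W·μ_F > σ_F². If x > 0 satisfies σ_r²·x⁴ + W·(μ_r − σ_r²)·x² − W·c·x + (σ_F² − W·μ_F) = 0, then the equilibrium staking fraction is strictly positive: c/x + μ_F/x² − μ_r + σ_r² > 0. -/
/-- At any positive root of the equilibrium quartic, the equilibrium staking fraction
is strictly positive. -/
theorem equilibrium_staking_fraction_pos (W c μF σF μr σr : ℝ)
    (hW : 0 < W) (hc : 0 < c) (hμF : 0 < μF) (hσF : 0 ≤ σF) (hσr : 0 < σr)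
    (hWμF : σF ^ 2 < W * μF) (x : ℝ) (hx : 0 < x)
    (hroot : σr ^ 2 * x ^ 4 + W * (μr - σr ^ 2) * x ^ 2 - W * c * x + (σF ^ 2 - W * μF) = 0) :
    0 < c / x + μF / x ^ 2 - μr + σr ^ 2 := by
  -- Multiplying the numerator by `W * x ^ 2` gives exactly the terms of the quartic
  -- that carry `W`, so the root equation expresses it through the two positive ones.
  have key : c / x + μF / x ^ 2 - μr + σr ^ 2
      = (σr ^ 2 * x ^ 4 + σF ^ 2) / (W * x ^ 2) := by
    field_simp
    linear_combination -hroot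
  rw [key]
  positivity
end

section
/- (Proposition 1, variance-dominated regime.) Fix c > 0, μ_F > 0, σ_F ≥ 0, σ_r > 0, and μ_r < σ_r² with μ_r ∈ ℝ. For each W > σ_F²/μ_F, let x(W) denote the unique positive root of σ_r²·x⁴ + W·(μ_r − σ_r²)·x² − W·c·x + (σ_F² − W·μ_F) = 0, and set S*(W) = x(W)². Then S*(W)/W → 1 − μ_r/σ_r² as W → ∞. -/
/-!
Write `D = σr ^ 2 - μr > 0` and `L = D / σr ^ 2`. Dividing the quartic by `σr ^ 2 * W * x ^ 2` gives
`x ^ 2 / W = L + c / (σr ^ 2 * x) + (μF - σF ^ 2 / W) / (σr ^ 2 * x ^ 2)`.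
Both corrections are positive for `W > σF ^ 2 / μF`, so `x ^ 2 ≥ L * W`, which forces `x → ∞`;
bounding the corrections by `c / (σr ^ 2 * x) + μF / (σr ^ 2 * x ^ 2) → 0` squeezes the ratio to `L`.
-/

open Filter

/-- Proposition 1, variance-dominated regime (`Δ = μ_r − σ_r² < 0`): the equilibrium
staked fraction `S*(W)/W` converges to `1 − μ_r/σ_r²` as `W → ∞`. -/
theorem variance_dominated_asymptotics (c μF σF μr σr : ℝ)
    (hc : 0 < c) (hμF : 0 < μF) (hσF : 0 ≤ σF) (hσr : 0 < σr) (hΔ : μr < σr ^ 2)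
    (x : ℝ → ℝ)
    (hx : ∀ W, σF ^ 2 / μF < W → 0 < x W ∧
      σr ^ 2 * (x W) ^ 4 + W * (μr - σr ^ 2) * (x W) ^ 2 - W * c * (x W)
        + (σF ^ 2 - W * μF) = 0) :
    Tendsto (fun W => (x W) ^ 2 / W) atTop (nhds (1 - μr / σr ^ 2)) := by
  have hs : 0 < σr ^ 2 := by positivity
  have hL : 0 < 1 - μr / σr ^ 2 := by
    rw [sub_pos, div_lt_one hs]; exact hΔ
  have key : ∀ W, σF ^ 2 / μF < W → 0 < W ∧ 0 < x W ∧ 1 - μr / σr ^ 2 ≤ x W ^ 2 / W ∧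
      x W ^ 2 / W ≤ 1 - μr / σr ^ 2 + c / σr ^ 2 * (x W)⁻¹
        + μF / σr ^ 2 * ((x W)⁻¹ * (x W)⁻¹) := by
    intro W hW
    obtain ⟨hpos, heq⟩ := hx W hW
    have hW0 : 0 < W := lt_of_le_of_lt (by positivity) hW
    have hF : σF ^ 2 < W * μF := (div_lt_iff₀ hμF).mp hW
    have hid : x W ^ 2 / W = 1 - μr / σr ^ 2 + c / σr ^ 2 * (x W)⁻¹
        + (W * μF - σF ^ 2) / (W * σr ^ 2 * x W ^ 2) := by
      field_simp
      linear_combination heq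
    have h1 : 0 < (W * μF - σF ^ 2) / (W * σr ^ 2 * x W ^ 2) :=
      div_pos (by linarith) (by positivity)
    have h2 : (W * μF - σF ^ 2) / (W * σr ^ 2 * x W ^ 2)
        ≤ μF / σr ^ 2 * ((x W)⁻¹ * (x W)⁻¹) := by
      have h : μF / σr ^ 2 * ((x W)⁻¹ * (x W)⁻¹) = (W * μF) / (W * σr ^ 2 * x W ^ 2) := by
        field_simp
      rw [h]
      gcongr
      nlinarith [sq_nonneg σF]
    have h3 : 0 < c / σr ^ 2 * (x W)⁻¹ := by positivity
    exact ⟨hW0, hpos, by linarith, by linarith⟩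
  have hev := eventually_gt_atTop (σF ^ 2 / μF)
  have hxtop : Tendsto x atTop atTop := by
    have hsqrt : Tendsto (fun W : ℝ => √((1 - μr / σr ^ 2) * W)) atTop atTop :=
      Real.tendsto_sqrt_atTop.comp (tendsto_id.const_mul_atTop hL)
    refine tendsto_atTop_mono' _ ?_ hsqrt
    filter_upwards [hev] with W hW
    obtain ⟨hW0, hpos, hlow, -⟩ := key W hW
    exact Real.sqrt_le_iff.mpr ⟨hpos.le, (le_div_iff₀ hW0).mp hlow⟩
  have hinv : Tendsto (fun W => (x W)⁻¹) atTop (nhds 0) := tendsto_inv_atTop_zero.comp hxtop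
  have hup : Tendsto (fun W => 1 - μr / σr ^ 2 + c / σr ^ 2 * (x W)⁻¹
      + μF / σr ^ 2 * ((x W)⁻¹ * (x W)⁻¹)) atTop (nhds (1 - μr / σr ^ 2)) := by
    simpa using ((hinv.const_mul (c / σr ^ 2)).const_add (1 - μr / σr ^ 2)).add
      ((hinv.mul hinv).const_mul (μF / σr ^ 2))
  refine tendsto_of_tendsto_of_tendsto_of_le_of_le' tendsto_const_nhds hup ?_ ?_
  · filter_upwards [hev] with W hW using (key W hW).2.2.1
  · filter_upwards [hev] with W hW using (key W hW).2.2.2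
end

section
/- (Proposition 1, critical phase boundary.) Fix c > 0, μ_F > 0, σ_F ≥ 0, σ_r > 0, and suppose μ_r = σ_r². For each W > σ_F²/μ_F, let x(W) denote the unique positive root of σ_r²·x⁴ + W·(μ_r − σ_r²)·x² − W·c·x + (σ_F² − W·μ_F) = 0, and set S*(W) = x(W)². Then σ_r²·S*(W)^{3/2}/(c·W) → 1 as W → ∞; in particular S*(W) scales as W^{2/3}. -/
open Filter

/-!
At the critical boundary the quadratic term vanishes, so the equation reads
`σ_r² x⁴ = W c x + (W μ_F - σ_F²)`. As `x > 0`, the right side is at least `W μ_F - σ_F²`, which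
tends to infinity with `W`, and hence so does `x(W)`. Dividing by `c W x` gives
`1 ≤ σ_r² x³ / (c W) ≤ 1 + μ_F / (c x)`, and the claim follows by squeezing, since
`(x²)^(3/2) = x³`.
-/

/-- Positive solutions of the critical quartic tend to infinity with `W`. -/
lemma tendsto_root_atTop {c μF σF σr : ℝ} (hc : 0 < c) (hμF : 0 < μF) {x : ℝ → ℝ}
    (hx : ∀ᶠ W in atTop, 0 < x W ∧
      σr ^ 2 * x W ^ 4 = W * c * x W + (W * μF - σF ^ 2)) :
    Tendsto x atTop atTop := by
  refine tendsto_atTop.2 fun b => ?_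
  filter_upwards [hx, eventually_gt_atTop 0,
    eventually_gt_atTop ((σr ^ 2 * b ^ 4 + σF ^ 2) / μF)] with W ⟨hpos, heq⟩ hW hbW
  by_contra! hlt
  rw [div_lt_iff₀ hμF] at hbW
  have h4 : σr ^ 2 * x W ^ 4 ≤ σr ^ 2 * b ^ 4 := by gcongr
  have h1 : 0 < W * c * x W := by positivity
  linarith

/-- Proposition 1, critical phase boundary (`μ_r = σ_r²`): the equilibrium stake
satisfies `σ_r²·S*(W)^{3/2}/(c·W) → 1`, i.e. `S*(W)` scales as `W^{2/3}`. -/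
theorem critical_boundary_asymptotics (c μF σF σr μr : ℝ)
    (hc : 0 < c) (hμF : 0 < μF) (hσF : 0 ≤ σF) (hσr : 0 < σr) (hΔ : μr = σr ^ 2)
    (x : ℝ → ℝ)
    (hx : ∀ W, σF ^ 2 / μF < W → 0 < x W ∧
      σr ^ 2 * (x W) ^ 4 + W * (μr - σr ^ 2) * (x W) ^ 2 - W * c * (x W)
        + (σF ^ 2 - W * μF) = 0) :
    Tendsto (fun W => σr ^ 2 * ((x W) ^ 2 : ℝ) ^ ((3 : ℝ) / 2) / (c * W)) atTop (nhds 1) := by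
  subst hΔ
  have hroot : ∀ᶠ W in atTop, 0 < x W ∧
      σr ^ 2 * x W ^ 4 = W * c * x W + (W * μF - σF ^ 2) := by
    filter_upwards [eventually_gt_atTop (σF ^ 2 / μF)] with W hW
    obtain ⟨hpos, heq⟩ := hx W hW
    exact ⟨hpos, by linear_combination heq⟩
  have hupper : Tendsto (fun W => 1 + μF / (c * x W)) atTop (nhds 1) := by
    simpa using ((tendsto_root_atTop hc hμF hroot).const_mul_atTop hc).const_div_atTop μF
      |>.const_add 1
  have hpow : ∀ W, 0 < x W → ((x W) ^ 2 : ℝ) ^ ((3 : ℝ) / 2) = x W ^ 3 := by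
    intro W hpos
    rw [← Real.rpow_natCast, ← Real.rpow_mul hpos.le, ← Real.rpow_natCast]
    norm_num
  refine tendsto_of_tendsto_of_tendsto_of_le_of_le' tendsto_const_nhds hupper ?_ ?_
  · filter_upwards [hroot, eventually_gt_atTop 0, eventually_gt_atTop (σF ^ 2 / μF)]
      with W ⟨hpos, heq⟩ hW hW'
    rw [div_lt_iff₀ hμF] at hW'
    rw [hpow W hpos, le_div_iff₀ (by positivity)]
    refine le_of_mul_le_mul_right ?_ hpos
    linarith
  · filter_upwards [hroot, eventually_gt_atTop 0] with W ⟨hpos, heq⟩ hW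
    rw [hpow W hpos, div_le_iff₀ (by positivity)]
    have hsplit : (1 + μF / (c * x W)) * (c * W) * x W = W * c * x W + W * μF := by
      field_simp
    refine le_of_mul_le_mul_right ?_ hpos
    rw [hsplit]
    linarith [sq_nonneg σF]
end

section
/- (Proposition 1, yield-dominated regime.) Fix c > 0, μ_F > 0, σ_F ≥ 0, σ_r > 0, and μ_r > σ_r². For each W > σ_F²/μ_F, let x(W) denote the unique positive root of σ_r²·x⁴ + W·(μ_r − σ_r²)·x² − W·c·x + (σ_F² − W·μ_F) = 0, and set S*(W) = x(W)². Then as W → ∞: (i) x(W) → (c + √(c² + 4·(μ_r − σ_r²)·μ_F))/(2·(μ_r − σ_r²)), so S*(W) converges to a finite constant; and (ii) the staking fraction S*(W)/W → 0. -/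
/-!
Write `Δ = μr - σr ^ 2` and let `L` be the positive root of `Δ L² - c L - μF = 0`. Since the
roots of this quadratic are `L` and `-μF / (Δ L)`, the quartic equation at `x = x W` reads
`W (L - x) (Δ x L + μF) = L (σr² x⁴ + σF²)`. Hence `x ≤ L`, and then
`0 ≤ L - x ≤ L (σr² L⁴ + σF²) / (μF W)`, which gives `x W → L` with rate `O(1 / W)`. The
staking fraction is a convergent quantity divided by `W`, so it vanishes in the limit.
-/

open Filter

/-- Proposition 1, yield-dominated regime (`μ_r > σ_r²`): the unique positive root of
the equilibrium quartic converges to a finite constant and the staking fraction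
`S*(W)/W` tends to zero as `W → ∞`. -/
theorem yield_dominated_asymptotics (c μF σF σr μr : ℝ)
    (hc : 0 < c) (hμF : 0 < μF) (hσF : 0 ≤ σF) (hσr : 0 < σr) (hΔ : σr ^ 2 < μr)
    (x : ℝ → ℝ)
    (hx : ∀ W, σF ^ 2 / μF < W → 0 < x W ∧
      σr ^ 2 * (x W) ^ 4 + W * (μr - σr ^ 2) * (x W) ^ 2 - W * c * (x W)
        + (σF ^ 2 - W * μF) = 0) :
    Tendsto x atTop
        (nhds ((c + Real.sqrt (c ^ 2 + 4 * (μr - σr ^ 2) * μF)) / (2 * (μr - σr ^ 2)))) ∧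
      Tendsto (fun W => (x W) ^ 2 / W) atTop (nhds 0) := by
  have hD : 0 < μr - σr ^ 2 := sub_pos.mpr hΔ
  set D := μr - σr ^ 2 with hDdef
  set L := (c + Real.sqrt (c ^ 2 + 4 * D * μF)) / (2 * D) with hL
  have hL0 : 0 < L := by positivity
  have hroot : D * L ^ 2 - c * L - μF = 0 := by
    have hs := Real.sq_sqrt (show 0 ≤ c ^ 2 + 4 * D * μF by positivity)
    have h2 : 2 * D * L - c = Real.sqrt (c ^ 2 + 4 * D * μF) := by
      rw [hL]; field_simp; ring
    rw [← h2] at hs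
    have h3 : (4 * D) * (D * L ^ 2 - c * L - μF) = 0 := by linarith
    exact (mul_eq_zero.mp h3).resolve_left (by positivity)
  have key : ∀ W, max 0 (σF ^ 2 / μF) < W →
      L - (σr ^ 2 * L ^ 4 + σF ^ 2) * L / μF / W ≤ x W ∧ x W ≤ L := by
    intro W hW
    have hW0 : 0 < W := (le_max_left _ _).trans_lt hW
    obtain ⟨hx0, hq⟩ := hx W ((le_max_right _ _).trans_lt hW)
    have hfac : (L - x W) * (W * (D * x W * L + μF)) = (σr ^ 2 * x W ^ 4 + σF ^ 2) * L := by
      linear_combination W * x W * hroot - L * hq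
    have hle : x W ≤ L := by
      have h1 : 0 ≤ (L - x W) * (W * (D * x W * L + μF)) := by rw [hfac]; positivity
      have := nonneg_of_mul_nonneg_left h1 (by positivity)
      linarith
    refine ⟨?_, hle⟩
    have h4 : (L - x W) * (W * μF) ≤ (σr ^ 2 * L ^ 4 + σF ^ 2) * L :=
      calc (L - x W) * (W * μF) ≤ (L - x W) * (W * (D * x W * L + μF)) := by
            have : 0 ≤ D * x W * L := by positivity
            have : 0 ≤ L - x W := by linarith
            gcongr
            linarith
        _ = (σr ^ 2 * x W ^ 4 + σF ^ 2) * L := hfac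
        _ ≤ (σr ^ 2 * L ^ 4 + σF ^ 2) * L := by gcongr
    have h5 : L - x W ≤ (σr ^ 2 * L ^ 4 + σF ^ 2) * L / μF / W := by
      rw [div_div, le_div_iff₀ (by positivity), mul_comm μF W]
      exact h4
    linarith
  have hlim : Tendsto x atTop (nhds L) := by
    have hlow : Tendsto (fun W : ℝ => L - (σr ^ 2 * L ^ 4 + σF ^ 2) * L / μF / W) atTop
        (nhds L) := by
      simpa using tendsto_const_nhds.sub
        (tendsto_const_nhds.div_atTop (tendsto_id (α := ℝ) (x := atTop)))
    refine tendsto_of_tendsto_of_tendsto_of_le_of_le' hlow tendsto_const_nhds ?_ ?_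
    · filter_upwards [eventually_gt_atTop (max 0 (σF ^ 2 / μF))] with W hW using (key W hW).1
    · filter_upwards [eventually_gt_atTop (max 0 (σF ^ 2 / μF))] with W hW using (key W hW).2
  exact ⟨hlim, (hlim.pow 2).div_atTop tendsto_id⟩
end

section
/- Fix W > 0, c > 0, μ_F > 0, σ_r > 0. Let S : ℝ → ℝ be a function differentiable at Δ₀ ∈ ℝ, with S(Δ) > 0 on a neighborhood of Δ₀, satisfying the equilibrium identity σ_r²·S(Δ)² + W·Δ·S(Δ) − W·c·√(S(Δ)) − W·μ_F = 0 for all Δ in that neighborhood. Then the derivative of S at Δ₀ equals −W/(σ_r² + W·c/(2·S(Δ₀)^{3/2}) + W·μ_F/S(Δ₀)²), and in particular it is strictly negative. -/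
/-!
Differentiating the equilibrium identity at `Δ₀` gives, with `s = S Δ₀` and `d = S' Δ₀`,
`(2 σr² s + W Δ₀ - W c / (2 √s)) d = -W s`. The coefficient of `d` has no evident sign, but the
identity itself at `Δ₀` eliminates `W Δ₀`, and the coefficient becomes `s` times
`σr² + W c / (2 s^(3/2)) + W μF / s²`, which is a sum of positive terms.
-/

open Filter

/-- Comparative statics of the equilibrium stake with respect to the external
risk-adjusted opportunity cost `Δ`: the implicit equilibrium identity forces
`dS/dΔ = −W/(σ_r² + W·c/(2·S^{3/2}) + W·μ_F/S²) < 0`. -/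
theorem stake_sensitivity (W c μF σr : ℝ)
    (hW : 0 < W) (hc : 0 < c) (hμF : 0 < μF) (hσr : 0 < σr)
    (S : ℝ → ℝ) (Δ₀ : ℝ) (hdiff : DifferentiableAt ℝ S Δ₀)
    (heq : ∀ᶠ Δ in nhds Δ₀, 0 < S Δ ∧
      σr ^ 2 * (S Δ) ^ 2 + W * Δ * S Δ - W * c * Real.sqrt (S Δ) - W * μF = 0) :
    deriv S Δ₀ =
        -W / (σr ^ 2 + W * c / (2 * (S Δ₀) ^ ((3 : ℝ) / 2)) + W * μF / (S Δ₀) ^ 2) ∧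
      deriv S Δ₀ < 0 := by
  obtain ⟨hs, h0⟩ := heq.self_of_nhds
  have hd := hdiff.hasDerivAt
  have hF := ((((hd.pow 2).const_mul (σr ^ 2)).add
    (((hasDerivAt_id Δ₀).const_mul W).mul hd)).sub
    ((hd.sqrt hs.ne').const_mul (W * c))).sub_const (W * μF)
  have hz := hF.unique
    ((hasDerivAt_const Δ₀ (0 : ℝ)).congr_of_eventuallyEq (heq.mono fun Δ h => h.2))
  generalize deriv S Δ₀ = d at hz ⊢
  -- In terms of `r = √(S Δ₀)` every power that occurs is integral.
  obtain ⟨r, hr, hrs⟩ : ∃ r : ℝ, 0 < r ∧ S Δ₀ = r ^ 2 :=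
    ⟨√(S Δ₀), Real.sqrt_pos.2 hs, (Real.sq_sqrt hs.le).symm⟩
  have hpow : (r ^ 2) ^ ((3 : ℝ) / 2) = r ^ 3 := by
    rw [← Real.rpow_natCast r 2, ← Real.rpow_mul hr.le, ← Real.rpow_natCast r 3]
    norm_num
  have hsqrt : √(r ^ 2) = r := Real.sqrt_sq hr.le
  simp only [hrs, hsqrt, id] at h0 hz
  rw [hrs, hpow]
  have hD : 0 < σr ^ 2 + W * c / (2 * r ^ 3) + W * μF / (r ^ 2) ^ 2 := by positivity
  have hmain : d = -W / (σr ^ 2 + W * c / (2 * r ^ 3) + W * μF / (r ^ 2) ^ 2) := by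
    rw [eq_div_iff hD.ne']
    field_simp at hz ⊢
    norm_num at hz
    linear_combination r * hz - 2 * d * h0
  exact ⟨hmain, hmain ▸ div_neg_of_neg_of_pos (neg_lt_zero.2 hW) hD⟩
end

section
/- Fix W > 0, c > 0, μ_F > 0, σ_F ≥ 0, σ_r > 0 with W·μ_F > σ_F², and let Δ₁ < Δ₂ be real numbers. If x₁ > 0 satisfies σ_r²·x₁⁴ + W·Δ₁·x₁² − W·c·x₁ + (σ_F² − W·μ_F) = 0 and x₂ > 0 satisfies σ_r²·x₂⁴ + W·Δ₂·x₂² − W·c·x₂ + (σ_F² − W·μ_F) = 0, then x₁ > x₂; i.e., the equilibrium stake is strictly decreasing in the external risk-adjusted opportunity cost Δ. -/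
/-!
Dividing the quartic by `x²` isolates `Δ`: a positive root satisfies `g x = -W * Δ`, where
`g x = σr² x² - W c / x - (W μF - σF²) / x²` is increasing on `x > 0` because its coefficients
have the indicated signs. So a larger `Δ` forces a smaller root. The proof uses this with
denominators cleared, combining the two equations as `x₁² * h₂ - x₂² * h₁`.
-/

/-- The equilibrium stake is strictly decreasing in the external risk-adjusted
opportunity cost `Δ`: if `Δ₁ < Δ₂` then the corresponding positive roots of the
equilibrium quartic satisfy `x₁ > x₂`. -/
theorem stake_strict_anti (W c μF σF σr : ℝ)
    (hW : 0 < W) (hc : 0 < c) (hμF : 0 < μF) (hσF : 0 ≤ σF) (hσr : 0 < σr)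
    (hWμF : σF ^ 2 < W * μF) (Δ₁ Δ₂ : ℝ) (hΔ : Δ₁ < Δ₂)
    (x₁ x₂ : ℝ) (hx₁ : 0 < x₁) (hx₂ : 0 < x₂)
    (h₁ : σr ^ 2 * x₁ ^ 4 + W * Δ₁ * x₁ ^ 2 - W * c * x₁ + (σF ^ 2 - W * μF) = 0)
    (h₂ : σr ^ 2 * x₂ ^ 4 + W * Δ₂ * x₂ ^ 2 - W * c * x₂ + (σF ^ 2 - W * μF) = 0) :
    x₂ < x₁ := by
  by_contra! hle
  have hsq : 0 ≤ x₂ ^ 2 - x₁ ^ 2 := by nlinarith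
  have hr : 0 ≤ σr ^ 2 * (x₁ ^ 2 * x₂ ^ 2) * (x₂ ^ 2 - x₁ ^ 2) := by positivity
  have hΔ' : 0 < W * (Δ₂ - Δ₁) * (x₁ ^ 2 * x₂ ^ 2) :=
    mul_pos (mul_pos hW (sub_pos.2 hΔ)) (by positivity)
  have hc' : 0 ≤ W * c * (x₁ * x₂) * (x₂ - x₁) :=
    mul_nonneg (by positivity) (sub_nonneg.2 hle)
  have hF : 0 ≤ (W * μF - σF ^ 2) * (x₂ ^ 2 - x₁ ^ 2) :=
    mul_nonneg (sub_nonneg.2 hWμF.le) hsq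
  -- `x₁² * h₂ - x₂² * h₁` says that these four terms, one of them positive, sum to zero.
  have : (0 : ℝ) < 0 := by
    linear_combination hr + hΔ' + hc' + hF + x₁ ^ 2 * h₂ - x₂ ^ 2 * h₁
  exact lt_irrefl _ this
end

section
/- Fix W_i > 0, W_c > 0, γ > 0, c > 0, σ_r > 0, and Δ ∈ ℝ. The cubic polynomial Q(x) = x³ + (γ/c)·x² − (W_c − W_i·Δ/σ_r²)·x − W_i·c/σ_r² has exactly one root in (0, ∞): there exists a unique x* > 0 with Q(x*) = 0. -/
/-!
Write the cubic as `q x = x³ + a x² - b x - d` with `a, d > 0`. Existence is the intermediate value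
theorem, since `q 0 = -d < 0` and `q` is nonnegative at `1 + |b| + d`. For uniqueness, the quotient
`q x / x = x² + a x - b - d / x` is strictly increasing on `(0, ∞)`; cleared of denominators, this is
`y * q x - x * q y = (x - y) * (x y (x + y) + a x y + d)`, whose last factor is positive.
-/

theorem existsUnique_pos_root_cubic (a b d : ℝ) (ha : 0 < a) (hd : 0 < d) :
    ∃! x : ℝ, 0 < x ∧ x ^ 3 + a * x ^ 2 - b * x - d = 0 := by
  apply existsUnique_of_exists_of_unique
  · obtain ⟨M, hM⟩ : ∃ M, M = 1 + |b| + d := ⟨_, rfl⟩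
    have hb : 0 ≤ |b| := abs_nonneg b
    have hM1 : 1 ≤ M := by linarith
    have hM0 : 0 ≤ M := by linarith
    have hfM : 0 ≤ M ^ 3 + a * M ^ 2 - b * M - d := by
      have h1 : 1 + d ≤ M ^ 2 - b := by nlinarith [le_abs_self b]
      have h2 : 1 + d ≤ M * (M ^ 2 - b) := by nlinarith
      have h3 : 0 ≤ a * M ^ 2 := by positivity
      nlinarith
    have hcont : ContinuousOn (fun x : ℝ => x ^ 3 + a * x ^ 2 - b * x - d) (Set.Icc 0 M) := by
      fun_prop
    obtain ⟨x, hx, hfx⟩ := intermediate_value_Icc hM0 hcont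
      (show (0 : ℝ) ∈ Set.Icc _ _ from ⟨by norm_num; exact hd.le, hfM⟩)
    refine ⟨x, lt_of_le_of_ne hx.1 ?_, hfx⟩
    rintro rfl
    norm_num at hfx
    exact hd.ne' hfx
  · rintro x y ⟨hx, hqx⟩ ⟨hy, hqy⟩
    have key : (x - y) * (x * y * (x + y) + a * (x * y) + d) = 0 := by
      linear_combination y * hqx - x * hqy
    have hpos : 0 < x * y * (x + y) + a * (x * y) + d := by positivity
    exact sub_eq_zero.mp ((mul_eq_zero.mp key).resolve_right hpos.ne')

/-- The master cubic of the heterogeneous economy has exactly one positive root. -/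
theorem cubic_unique_positive_root (Wi Wc γ c σr Δ : ℝ)
    (hWi : 0 < Wi) (hWc : 0 < Wc) (hγ : 0 < γ) (hc : 0 < c) (hσr : 0 < σr) :
    ∃! x : ℝ, 0 < x ∧
      x ^ 3 + (γ / c) * x ^ 2 - (Wc - Wi * Δ / σr ^ 2) * x - Wi * c / σr ^ 2 = 0 :=
  existsUnique_pos_root_cubic _ _ _ (by positivity) (by positivity)
end

section
/- Fix W_i > 0, W_c > 0, γ > 0, c > 0, σ_r > 0, Δ ∈ ℝ. Let S_i, S_c ∈ ℝ with S_c < W_c and S := S_i + S_c > 0, and set x = √S. Then the pair of equilibrium conditions (investor clearance) S_i = (W_i/σ_r²)·(c/√S − Δ) and (consumer MRS) γ/(W_c − S_c) = c/√S holds if and only if S_c = W_c − (γ/c)·x and x satisfies x³ + (γ/c)·x² − (W_c − W_i·Δ/σ_r²)·x − W_i·c/σ_r² = 0. -/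
/-!
Writing `x = √S`, so that `x > 0` and `x² = S_i + S_c`, the consumer condition is linear in `S_c`
and is equivalent to `S_c = W_c − (γ/c)·x`. Once this holds, the cubic factors as
`x · (S_i − (W_i/σ_r²)·(c/x − Δ))`, so it vanishes exactly when investor clearance holds.
-/


/-- The heterogeneous equilibrium conditions (investor clearance and consumer MRS)
hold if and only if the consumer stake has the closed form `S_c = W_c − (γ/c)·√S`
and `x = √S` is a root of the master cubic. -/
theorem heterogeneous_equilibrium_iff_cubic (Wi Wc γ c σr Δ : ℝ)
    (hWi : 0 < Wi) (hWc : 0 < Wc) (hγ : 0 < γ) (hc : 0 < c) (hσr : 0 < σr)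
    (Si Sc : ℝ) (hSc : Sc < Wc) (S : ℝ) (hSdef : S = Si + Sc) (hS : 0 < S)
    (x : ℝ) (hx : x = Real.sqrt S) :
    (Si = (Wi / σr ^ 2) * (c / Real.sqrt S - Δ) ∧ γ / (Wc - Sc) = c / Real.sqrt S) ↔
      (Sc = Wc - (γ / c) * x ∧
        x ^ 3 + (γ / c) * x ^ 2 - (Wc - Wi * Δ / σr ^ 2) * x - Wi * c / σr ^ 2 = 0) := by
  have hx0 : 0 < x := hx ▸ Real.sqrt_pos.mpr hS
  have hxsq : x ^ 2 = Si + Sc := by rw [hx, Real.sq_sqrt hS.le, hSdef]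
  rw [← hx]
  have hgap : Wc - Sc ≠ 0 := (sub_pos.mpr hSc).ne'
  have hmrs : γ / (Wc - Sc) = c / x ↔ Sc = Wc - (γ / c) * x := by
    rw [div_eq_div_iff hgap hx0.ne', eq_sub_iff_add_eq, ← eq_sub_iff_add_eq', div_mul_eq_mul_div,
      div_eq_iff hc.ne', mul_comm c]
  rw [hmrs, and_comm]
  refine and_congr_right fun h => ?_
  have hfac : x ^ 3 + (γ / c) * x ^ 2 - (Wc - Wi * Δ / σr ^ 2) * x - Wi * c / σr ^ 2
      = x * (Si - (Wi / σr ^ 2) * (c / x - Δ)) := by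
    have hcancel : x * (c / x) = c := mul_div_cancel₀ c hx0.ne'
    linear_combination x * hxsq + x * h + (Wi / σr ^ 2) * hcancel
  rw [hfac, mul_eq_zero, or_iff_right hx0.ne', sub_eq_zero]
end

section
/- Fix γ > 0, c > 0, σ_r > 0, and Δ < 0. Let W_c : ℝ → ℝ be nonnegative with W_c(W)/W → 0 as W → ∞, and for each W > 0 let x(W) denote the unique positive root of x³ + (γ/c)·x² − (W_c(W) − W·Δ/σ_r²)·x − W·c/σ_r² = 0. Then the total equilibrium stake S(W) = x(W)² satisfies S(W)/W → −Δ/σ_r² as W → ∞. -/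
/-!
Put `δ = -Δ / σr ^ 2 > 0`. Dividing the cubic by `W * x W` gives
`x² / W * (1 + (γ / c) / x) = δ + Wc W / W + (c / σr ^ 2) / x`.
Since `Wc W * x` and `W * c / σr ^ 2` are nonnegative, the cubic also yields
`δ * W ≤ x * (x + γ / c)`, which forces `x W → ∞`. Both terms carrying `1 / x` then vanish in
the limit, as does `Wc W / W`, and what remains is `x² / W → δ`.
-/

open Filter

/-- In the variance-dominated regime (`Δ < 0`), if investor wealth dominates consumer
wealth (`W_c(W)/W → 0`), the total equilibrium stake satisfies `S(W)/W → −Δ/σ_r²`. -/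
theorem heterogeneous_stake_asymptotics (γ c σr Δ : ℝ)
    (hγ : 0 < γ) (hc : 0 < c) (hσr : 0 < σr) (hΔ : Δ < 0)
    (Wc : ℝ → ℝ) (hWc : ∀ W, 0 ≤ Wc W)
    (hWclim : Tendsto (fun W => Wc W / W) atTop (nhds 0))
    (x : ℝ → ℝ)
    (hx : ∀ W, 0 < W → 0 < x W ∧
      (x W) ^ 3 + (γ / c) * (x W) ^ 2 - (Wc W - W * Δ / σr ^ 2) * (x W)
        - W * c / σr ^ 2 = 0) :
    Tendsto (fun W => (x W) ^ 2 / W) atTop (nhds (-Δ / σr ^ 2)) := by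
  have ha : 0 < γ / c := by positivity
  have hb : 0 < c / σr ^ 2 := by positivity
  have hd : 0 < -Δ / σr ^ 2 := div_pos (neg_pos.mpr hΔ) (by positivity)
  have e1 : ∀ W, W * Δ / σr ^ 2 = -(W * (-Δ / σr ^ 2)) := fun W => by ring
  have e2 : ∀ W, W * c / σr ^ 2 = W * (c / σr ^ 2) := fun W => by ring
  simp only [e1, e2] at hx
  generalize γ / c = a at *
  generalize c / σr ^ 2 = b at *
  generalize -Δ / σr ^ 2 = δ at *
  have hlow : ∀ W, 0 < W → δ * W ≤ x W * (x W + a) := by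
    intro W hW
    obtain ⟨h0, h⟩ := hx W hW
    have h1 : 0 ≤ Wc W * x W := mul_nonneg (hWc W) h0.le
    have h2 : 0 < W * b := by positivity
    refine le_of_mul_le_mul_right ?_ h0
    linarith
  have hxtop : Tendsto x atTop atTop := by
    refine tendsto_atTop.mpr fun M => ?_
    filter_upwards [eventually_gt_atTop 0, eventually_gt_atTop (|M| * (|M| + a) / δ)]
      with W hW hWM
    have h0 := (hx W hW).1
    by_contra! hlt
    have hle : x W ≤ |M| := hlt.le.trans (le_abs_self M)
    have h1 : x W * (x W + a) ≤ |M| * (|M| + a) := by gcongr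
    rw [div_lt_iff₀ hd] at hWM
    linarith [hlow W hW]
  have hlim : Tendsto (fun W => (δ + Wc W / W + b / x W) / (1 + a / x W)) atTop (nhds δ) := by
    have hn := (hWclim.const_add δ).add (hxtop.const_div_atTop b)
    have hden := (hxtop.const_div_atTop a).const_add 1
    simpa [Pi.div_def] using hn.div hden (by norm_num)
  refine hlim.congr' ?_
  filter_upwards [eventually_gt_atTop 0] with W hW
  obtain ⟨h0, h⟩ := hx W hW
  have hp : 0 < 1 + a / x W := by positivity
  rw [div_eq_iff hp.ne']
  field_simp
  linarith
end

section
/- Fix γ > 0, c > 0, σ_r > 0, and Δ < 0. Let W_c : ℝ → ℝ be nonnegative with W_c(W)/W → 0 as W → ∞, and for each W > 0 let x(W) denote the unique positive root of x³ + (γ/c)·x² − (W_c(W) − W·Δ/σ_r²)·x − W·c/σ_r² = 0; set S(W) = x(W)² and define the investor stake S_i(W) = S(W) − W_c(W) + (γ/c)·x(W). Then the investor share of the total stake tends to one: S_i(W)/S(W) → 1 as W → ∞. -/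
open Filter

/-!
Write `a = -Δ / σr²` and `g = γ / c`. Since `a > 0`, dividing the cubic by the positive root `x`
and dropping the positive terms `Wc` and `W c / (σr² x)` gives `a W ≤ x² + g x`
(`mul_le_sq_add_of_cubic_root`). Hence `x → ∞`, and as soon as `x ≥ 1` one has
`a W ≤ (1 + g) x²`, so `Wc / x²` is at most a constant times `Wc / W` and tends to zero. The claim
follows from `Si / S = 1 - Wc / x² + g / x`.
-/

/-- The quadratic lower bound on the positive root of the cubic: the stake grows at least
linearly in the investor wealth `W`. -/
lemma mul_le_sq_add_of_cubic_root {g c σr Δ W w y : ℝ} (hc : 0 < c) (hW : 0 < W)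
    (hw : 0 ≤ w) (hy : 0 < y)
    (h : y ^ 3 + g * y ^ 2 - (w - W * Δ / σr ^ 2) * y - W * c / σr ^ 2 = 0) :
    -Δ / σr ^ 2 * W ≤ y ^ 2 + g * y := by
  have h1 : 0 ≤ W * c / σr ^ 2 := by positivity
  have h2 : 0 ≤ w * y := by positivity
  refine le_of_mul_le_mul_right ?_ hy
  have e : -Δ / σr ^ 2 * W * y = -(W * Δ / σr ^ 2) * y := by ring
  rw [e]
  linarith [h]

/-- In the variance-dominated regime (`Δ < 0`) with dominant investor wealth, the
investor share of the total equilibrium stake tends to one. -/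
theorem investor_share_tendsto_one (γ c σr Δ : ℝ)
    (hγ : 0 < γ) (hc : 0 < c) (hσr : 0 < σr) (hΔ : Δ < 0)
    (Wc : ℝ → ℝ) (hWc : ∀ W, 0 ≤ Wc W)
    (hWclim : Tendsto (fun W => Wc W / W) atTop (nhds 0))
    (x : ℝ → ℝ)
    (hx : ∀ W, 0 < W → 0 < x W ∧
      (x W) ^ 3 + (γ / c) * (x W) ^ 2 - (Wc W - W * Δ / σr ^ 2) * (x W)
        - W * c / σr ^ 2 = 0)
    (S Si : ℝ → ℝ) (hS : ∀ W, S W = (x W) ^ 2)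
    (hSi : ∀ W, Si W = S W - Wc W + (γ / c) * x W) :
    Tendsto (fun W => Si W / S W) atTop (nhds 1) := by
  have hg : 0 < γ / c := by positivity
  have ha : 0 < -Δ / σr ^ 2 := div_pos (neg_pos.2 hΔ) (by positivity)
  have hbound : ∀ W, 0 < W → -Δ / σr ^ 2 * W ≤ x W ^ 2 + γ / c * x W := fun W hW =>
    mul_le_sq_add_of_cubic_root hc hW (hWc W) (hx W hW).1 (hx W hW).2
  set g := γ / c
  set a := -Δ / σr ^ 2
  have hxtop : Tendsto x atTop atTop := by
    refine tendsto_atTop.2 fun M => ?_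
    filter_upwards [eventually_gt_atTop 0, eventually_gt_atTop ((M ^ 2 + g * M) / a)] with W hW hWM
    by_contra! hlt
    have h0 := (hx W hW).1
    have h1 := hbound W hW
    rw [div_lt_iff₀ ha] at hWM
    have h2 : x W ^ 2 ≤ M ^ 2 := by gcongr
    have h3 : g * x W ≤ g * M := by gcongr
    linarith
  have hratio : Tendsto (fun W => Wc W / x W ^ 2) atTop (nhds 0) := by
    have hlim : Tendsto (fun W => (1 + g) / a * (Wc W / W)) atTop (nhds 0) := by
      simpa using hWclim.const_mul ((1 + g) / a)
    refine tendsto_of_tendsto_of_tendsto_of_le_of_le' tendsto_const_nhds hlim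
      (Eventually.of_forall fun W => div_nonneg (hWc W) (sq_nonneg _)) ?_
    filter_upwards [eventually_gt_atTop 0, hxtop.eventually_ge_atTop 1] with W hW hx1
    have h1 : a * W ≤ (1 + g) * x W ^ 2 := by
      have h2 : g * x W ≤ g * x W ^ 2 := by
        gcongr
        exact le_self_pow₀ hx1 two_ne_zero
      linarith [hbound W hW]
    have hxp : 0 < x W := (hx W hW).1
    rw [div_mul_div_comm, div_le_div_iff₀ (by positivity) (by positivity)]
    calc Wc W * (a * W) ≤ Wc W * ((1 + g) * x W ^ 2) := mul_le_mul_of_nonneg_left h1 (hWc W)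
      _ = (1 + g) * Wc W * x W ^ 2 := by ring
  have hlim : Tendsto (fun W => 1 - Wc W / x W ^ 2 + g / x W) atTop (nhds 1) := by
    simpa using (hratio.const_sub 1).add (hxtop.const_div_atTop g)
  refine hlim.congr' ?_
  filter_upwards [eventually_gt_atTop 0] with W hW
  have hne : x W ≠ 0 := (hx W hW).1.ne'
  rw [hSi, hS]
  field_simp
end
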